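/- Let n ≥ 1, let λ/μ be a skew shape, and let N be an integer at least the number of parts of λ. In the one-row n-ribbon lattice model with vertical-strip row weights (parameter y) and boundary condition B_{λ/μ}, the admissible states of nonzero weight are in bijection with the vertical n-ribbon strips of shape λ/μ, and the state corresponding to a strip S consisting of m ribbons with total spin σ(S) has weight q^{σ(S)}·(−y)^m. Consequently the partition function equals Σ_S q^{σ(S)} (−y)^{m(S)}, summed over all vertical n-ribbon strips S of shape λ/μ. -/

import Mathlib

/-!
Both sides are governed by sets of jumping beads. Read `ν + ρ` as bead positions `beads ν N`, and
number the diagonals of the plane so that the bead of row `i` sits on the diagonal of the first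
cell outside `ν` in that row. A set `M` of beads of `μ` is a valid jump to `lam` if moving every
bead of `M` by `n` places to the right turns `beads μ N` into `beads lam N` (`ValidJump`). There
is at most one such `M` (`ValidJump.unique`): in indicator functions `lam + M = μ + (M + n)`
(`validJump_iff`), and this determines `M` from left to right.

States. At a vertex the horizontal labels just shift, so a nonzero state is determined by the set
`M` of columns in which a bead departs, and it travels exactly `n` columns because `NE` has weight
`0`; the local rules say precisely that `M` is a valid jump (`exists_stateOf`). Each departure
contributes `-y`, and each resting bead contributes `q` to the number of beads passing over it
(`stateWeight_stateOf`).

Strips. A ribbon is a path with north and east steps, having one cell on each of `n` consecutive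
diagonals (`IsRibbon.exists_path`, `NEPath.isRibbon`). In a vertical strip the bottom-left cell of
a ribbon is the first cell outside `μ` in its row, so its diagonal is a bead position; let `M` be
the set of these. Counting the cells of `lam / μ` on each diagonal shows that `M` is a valid jump.
The bottom-left cell is also the north-western-most cell of the strip on its diagonal, so ribbons
starting further left pass below it, and disjoint paths never change sides: on every diagonal the
ribbons are stacked by decreasing starting diagonal. Hence `M` determines the strip
(`exists_validJump`). Conversely these stacked paths form a vertical strip for every valid jump
(`isVerticalTiling_stripOf`), and the spin of the ribbon of `m` is the number of resting beads
that `m` jumps over (`spin_stripTile`), which matches the exponent of `q` after a double count.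
-/

open Finset

namespace SuperLLT

/-- Two cells in `ℕ × ℕ` are adjacent if they share an edge. -/
def Adj (c d : ℕ × ℕ) : Prop :=
  (c.1 = d.1 ∧ (c.2 + 1 = d.2 ∨ d.2 + 1 = c.2)) ∨
    (c.2 = d.2 ∧ (c.1 + 1 = d.1 ∨ d.1 + 1 = c.1))

/-- A finite set of cells is connected if any two of its cells are joined by a path of
adjacent cells staying inside the set. -/
def ConnectedCells (s : Finset (ℕ × ℕ)) : Prop :=
  ∀ c ∈ s, ∀ d ∈ s, Relation.ReflTransGen (fun a b => a ∈ s ∧ b ∈ s ∧ Adj a b) c d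

/-- A set of cells is (the set of cells of) a skew shape if it is the difference of two
Young diagrams. -/
def IsSkewCells (s : Finset (ℕ × ℕ)) : Prop :=
  ∃ μ lam : YoungDiagram, μ ≤ lam ∧ s = lam.cells \ μ.cells

/-- The set of cells contains no 2×2 square. -/
def NoTwoByTwo (s : Finset (ℕ × ℕ)) : Prop :=
  ∀ i j : ℕ, ¬((i, j) ∈ s ∧ (i + 1, j) ∈ s ∧ (i, j + 1) ∈ s ∧ (i + 1, j + 1) ∈ s)

/-- An `n`-ribbon: a connected skew shape with `n` cells containing no 2×2 square. -/
def IsRibbon (n : ℕ) (s : Finset (ℕ × ℕ)) : Prop :=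
  s.card = n ∧ IsSkewCells s ∧ ConnectedCells s ∧ NoTwoByTwo s

/-- The spin of a ribbon: its number of rows minus one. -/
def spin (s : Finset (ℕ × ℕ)) : ℕ :=
  (s.image Prod.fst).card - 1

/-- The top-right-most cell of a ribbon: minimal row index, maximal column in that row. -/
def topRight (s : Finset (ℕ × ℕ)) : ℕ × ℕ :=
  ((s.image Prod.fst).min.getD 0,
    ((s.filter fun c => c.1 = (s.image Prod.fst).min.getD 0).image Prod.snd).max.getD 0)

/-- The bottom-left-most cell of a ribbon: maximal row index, minimal column in that row. -/
def bottomLeft (s : Finset (ℕ × ℕ)) : ℕ × ℕ :=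
  ((s.image Prod.fst).max.getD 0,
    ((s.filter fun c => c.1 = (s.image Prod.fst).max.getD 0).image Prod.snd).min.getD 0)

/-- The cell `c` of the strip with cell set `strip` touches the northern boundary of the
strip: the cell directly above `c` is not a cell of the strip. -/
def TouchesNorth (strip : Finset (ℕ × ℕ)) (c : ℕ × ℕ) : Prop :=
  c.1 = 0 ∨ (c.1 - 1, c.2) ∉ strip

/-- The cell `c` lies along the (upper-left) boundary of the strip: the cell directly to
the left of `c` is not a cell of the strip.  This is the condition on the bottom-left-most
box of each ribbon of a vertical ribbon strip (equivalently, flipping a vertical strip over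
the antidiagonal produces a horizontal strip whose ribbon heads touch the northern
boundary). -/
def TouchesWest (strip : Finset (ℕ × ℕ)) (c : ℕ × ℕ) : Prop :=
  c.2 = 0 ∨ (c.1, c.2 - 1) ∉ strip

/-- `tiles` is a tiling of the cell set `cells` by `n`-ribbons. -/
def IsTilingOf (n : ℕ) (cells : Finset (ℕ × ℕ)) (tiles : Finset (Finset (ℕ × ℕ))) : Prop :=
  (∀ t ∈ tiles, IsRibbon n t) ∧
    (∀ t ∈ tiles, ∀ t' ∈ tiles, t ≠ t' → Disjoint t t') ∧
    tiles.sup id = cells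

/-- A horizontal `n`-ribbon strip tiling: the top-right-most box of every ribbon touches
the northern boundary of the strip. -/
def IsHorizontalTiling (n : ℕ) (cells : Finset (ℕ × ℕ))
    (tiles : Finset (Finset (ℕ × ℕ))) : Prop :=
  IsTilingOf n cells tiles ∧ ∀ t ∈ tiles, TouchesNorth cells (topRight t)

/-- A vertical `n`-ribbon strip tiling: the bottom-left-most box of every ribbon lies on
the (north-west) boundary of the strip. -/
def IsVerticalTiling (n : ℕ) (cells : Finset (ℕ × ℕ))
    (tiles : Finset (Finset (ℕ × ℕ))) : Prop :=
  IsTilingOf n cells tiles ∧ ∀ t ∈ tiles, TouchesWest cells (bottomLeft t)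

open scoped Classical in
/-- `T` is a super `n`-ribbon tableau of shape `lam / μ`: a set of `n`-ribbons, each
labelled by a letter of `L`, tiling `lam / μ`, such that for every letter `i` the union of
`μ` with the ribbons labelled `≼ i` (with respect to the total order `le` on `L`) is a
partition shape, the ribbons with a fixed label `a` with `horiz a` form a horizontal
ribbon strip, and the ribbons with a fixed label `b` with `¬ horiz b` form a vertical
ribbon strip. -/
def IsSuperTableau (n : ℕ) (μ lam : YoungDiagram) {L : Type*}
    (le : L → L → Prop) (horiz : L → Prop) (T : Finset (Finset (ℕ × ℕ) × L)) : Prop :=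
  μ ≤ lam ∧
    (∀ p ∈ T, IsRibbon n p.1) ∧
    (∀ p ∈ T, ∀ p' ∈ T, p ≠ p' → Disjoint p.1 p'.1) ∧
    (T.sup fun p => p.1) = lam.cells \ μ.cells ∧
    (∀ i : L, ∃ ν : YoungDiagram,
      ν.cells = μ.cells ∪ ((T.filter fun p => le p.2 i).sup fun p => p.1)) ∧
    (∀ p ∈ T,
      (horiz p.2 →
        TouchesNorth ((T.filter fun p' => p'.2 = p.2).sup fun p' => p'.1) (topRight p.1)) ∧
      (¬horiz p.2 →
        TouchesWest ((T.filter fun p' => p'.2 = p.2).sup fun p' => p'.1) (bottomLeft p.1)))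

open scoped Classical in
/-- The (finite) set of all super `n`-ribbon tableaux of shape `lam / μ` with letters in
`L`. -/
noncomputable def superTableaux (n : ℕ) (μ lam : YoungDiagram) (L : Type*) [Fintype L]
    (le : L → L → Prop) (horiz : L → Prop) : Finset (Finset (Finset (ℕ × ℕ) × L)) :=
  ((lam.cells \ μ.cells).powerset ×ˢ (Finset.univ : Finset L)).powerset.filter
    (IsSuperTableau n μ lam le horiz)

/-- The spin of a tableau: the sum of the spins of its ribbons. -/
def tabSpin {L : Type*} (T : Finset (Finset (ℕ × ℕ) × L)) : ℕ :=
  ∑ p ∈ T, spin p.1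

open scoped Classical in
/-- The number of ribbons of the tableau `T` labelled `a`. -/
noncomputable def tabWt {L : Type*} (T : Finset (Finset (ℕ × ℕ) × L)) (a : L) : ℕ :=
  (T.filter fun p => p.2 = a).card

open scoped Classical in
/-- The super LLT polynomial `G_{lam/μ}(X/Y; q)`, evaluated in a commutative ring `R`:
`q` is the spin parameter and `z a` is the variable attached to the letter `a`; a ribbon
labelled by a horizontal letter `a` contributes a factor `z a`, and one labelled by a
vertical letter `b` contributes `-(z b)`.  (It is `0` if `¬ μ ≤ lam`.) -/
noncomputable def superLLT (n : ℕ) (μ lam : YoungDiagram) (L : Type*) [Fintype L]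
    (le : L → L → Prop) (horiz : L → Prop) {R : Type*} [CommRing R] (q : R) (z : L → R) :
    R :=
  ∑ T ∈ superTableaux n μ lam L le horiz,
    q ^ tabSpin T * ∏ a : L, (if horiz a then z a else -z a) ^ tabWt T a

/-- The total order on `Fin r ⊕ Fin s` in which all letters of the first alphabet precede
all letters of the second alphabet. -/
def sumLe {r s : ℕ} : Fin r ⊕ Fin s → Fin r ⊕ Fin s → Prop
  | Sum.inl i, Sum.inl j => i ≤ j
  | Sum.inl _, Sum.inr _ => True
  | Sum.inr _, Sum.inl _ => False
  | Sum.inr i, Sum.inr j => i ≤ j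

end SuperLLT

namespace SuperLLT

/-- The six admissible vertex types of the `n`-ribbon lattice model. -/
inductive VertexType
  | SW | NS | SE | NW | EW | NE
  deriving DecidableEq

/-- Classify an admissible vertex by `(v_N, v_S, v_W(1), v_E(n))`, where on vertical
edges `true` stands for `∧` and on horizontal edges `true` stands for `<`:
`SW = (∧,∧,>,>)`, `NS = (∨,∧,<,>)`, `SE = (∧,∧,<,<)`, `NW = (∨,∨,>,>)`,
`EW = (∧,∨,>,<)`, `NE = (∨,∨,<,<)`; all other configurations are inadmissible. -/
def classify : Bool → Bool → Bool → Bool → Option VertexType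
  | true, true, false, false => some .SW
  | false, true, true, false => some .NS
  | true, true, true, true => some .SE
  | false, false, false, false => some .NW
  | true, false, false, true => some .EW
  | false, false, true, true => some .NE
  | _, _, _, _ => none

/-- A vertex of the `n`-ribbon lattice model is admissible if the labels do not change
along straight edges (`v_E(i) = v_W(i+1)` for `1 ≤ i ≤ n-1`) and as many arrows point in
as out, i.e. `(v_N, v_S, v_W(1), v_E(n))` is one of the six admissible types.
Tuples are indexed by `Fin n`, with index `k` standing for position `k+1`. -/
def VertexAdmissible (n : ℕ) (vN vS : Bool) (vW vE : Fin n → Bool) : Prop :=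
  ∃ h : 0 < n,
    (∀ k : Fin n, ∀ hk : k.val + 1 < n, vE k = vW ⟨k.val + 1, hk⟩) ∧
      (classify vN vS (vW ⟨0, h⟩) (vE ⟨n - 1, Nat.sub_lt h Nat.one_pos⟩)).isSome = true

/-- The Boltzmann weight of a single vertex, given a table `tab` assigning a weight to
each admissible vertex type and each value of `s(v)`, the number of `<` labels among
`v_E(1), …, v_E(n-1)`.  Inadmissible vertices have weight `0`. -/
def vertexWeight {R : Type*} [CommRing R] (n : ℕ) (tab : VertexType → ℕ → R)
    (vN vS : Bool) (vW vE : Fin n → Bool) : R :=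
  if h : 0 < n then
    if ∀ k : Fin n, ∀ hk : k.val + 1 < n, vE k = vW ⟨k.val + 1, hk⟩ then
      match classify vN vS (vW ⟨0, h⟩) (vE ⟨n - 1, Nat.sub_lt h Nat.one_pos⟩) with
      | some ty =>
          tab ty ((Finset.univ.filter fun k : Fin n => k.val < n - 1 ∧ vE k = true).card)
      | none => 0
    else 0
  else 0

/-- Weights of a *horizontal-strip* row with spectral parameter `x` in the (original)
super ribbon lattice model:
`SW ↦ q^s`, `NS ↦ q^s`, `SE ↦ 0`, `NW ↦ 1`, `EW ↦ q^s x`, `NE ↦ q^s x`. -/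
def horizTable {R : Type*} [CommRing R] (q x : R) : VertexType → ℕ → R
  | .SW, s => q ^ s
  | .NS, s => q ^ s
  | .SE, _ => 0
  | .NW, _ => 1
  | .EW, s => q ^ s * x
  | .NE, s => q ^ s * x

/-- Weights of a *vertical-strip* row with spectral parameter `y` in the (original)
super ribbon lattice model:
`SW ↦ q^s`, `NS ↦ 1`, `SE ↦ -y`, `NW ↦ 1`, `EW ↦ -y`, `NE ↦ 0`. -/
def vertTable {R : Type*} [CommRing R] (q y : R) : VertexType → ℕ → R
  | .SW, s => q ^ s
  | .NS, _ => 1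
  | .SE, _ => -y
  | .NW, _ => 1
  | .EW, _ => -y
  | .NE, _ => 0

/-- Weights of a horizontal-strip row with spectral parameter `x` in the *alternate*
super ribbon lattice model, where `t(v) = (n-1) - s(v)` is the number of `>` labels
among `v_E(1), …, v_E(n-1)`:
`SW ↦ 0`, `NS ↦ q^t x`, `SE ↦ q^t`, `NW ↦ q^t x`, `EW ↦ q^t`, `NE ↦ 1`. -/
def altHorizTable {R : Type*} [CommRing R] (n : ℕ) (q x : R) : VertexType → ℕ → R
  | .SW, _ => 0
  | .NS, s => q ^ (n - 1 - s) * x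
  | .SE, s => q ^ (n - 1 - s)
  | .NW, s => q ^ (n - 1 - s) * x
  | .EW, s => q ^ (n - 1 - s)
  | .NE, _ => 1

/-- Weights of a vertical-strip row with spectral parameter `y` in the *alternate*
super ribbon lattice model:
`SW ↦ -y`, `NS ↦ -y`, `SE ↦ q^t`, `NW ↦ 0`, `EW ↦ 1`, `NE ↦ 1`. -/
def altVertTable {R : Type*} [CommRing R] (n : ℕ) (q y : R) : VertexType → ℕ → R
  | .SW, _ => -y
  | .NS, _ => -y
  | .SE, s => q ^ (n - 1 - s)
  | .NW, _ => 0
  | .EW, _ => 1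
  | .NE, _ => 1

/-- A state of an `n`-ribbon lattice grid with `m` rows and `C` columns: a label in
`Bool` (`true = ∧`) on each vertical edge (`m+1` tiers of `C` columns, tier `0` being the
top boundary and tier `m` the bottom boundary) and an `n`-tuple of labels in `Bool`
(`true = <`) on each horizontal edge (`C+1` edges in each of the `m` rows, edge `0` being
the left boundary and edge `C` the right boundary). -/
abbrev GridState (n m C : ℕ) : Type :=
  (Fin (m + 1) → Fin C → Bool) × (Fin m → Fin (C + 1) → Fin n → Bool)

/-- The Boltzmann weight of a state: the product of the weights of its vertices, row `r`
using the weight table `tab r`. -/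
def stateWeight {R : Type*} [CommRing R] (n m C : ℕ) (tab : Fin m → VertexType → ℕ → R)
    (st : GridState n m C) : R :=
  ∏ r : Fin m, ∏ c : Fin C,
    vertexWeight n (tab r) (st.1 r.castSucc c) (st.1 r.succ c)
      (st.2 r c.castSucc) (st.2 r c.succ)

/-- The boundary condition: prescribed labels on the top, bottom, left and right
boundary edges. -/
def BoundaryCond {n m C : ℕ} (top bottom : Fin C → Bool)
    (left right : Fin m → Fin n → Bool) (st : GridState n m C) : Prop :=
  st.1 0 = top ∧ st.1 (Fin.last m) = bottom ∧
    ∀ r : Fin m, st.2 r 0 = left r ∧ st.2 r (Fin.last C) = right r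

open scoped Classical in
/-- The partition function of the lattice model: the sum of the weights of all states
with the given boundary condition. -/
noncomputable def partitionZ {R : Type*} [CommRing R] (n m C : ℕ)
    (tab : Fin m → VertexType → ℕ → R) (top bottom : Fin C → Bool)
    (left right : Fin m → Fin n → Bool) : R :=
  ∑ st ∈ Finset.univ.filter (BoundaryCond top bottom left right),
    stateWeight n m C tab st

/-- The boundary row of vertical-edge labels determined by `lam + ρ`, where
`ρ = (N, N-1, …, 1)` and `lam` is padded with zeros to `N` parts: numbering the `C`
columns `1, …, C` from the left, column `c` carries `∧ = true` exactly if `c` is a part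
of `lam + ρ`, i.e. of the form `lam_{t+1} + (N - t)` for some `0 ≤ t < N`. -/
def diagBoundary (lam : YoungDiagram) (N C : ℕ) : Fin C → Bool := fun c =>
  decide ((c.val + 1) ∈ (Finset.range N).image fun t => lam.rowLen t + (N - t))

end SuperLLT

namespace SuperLLT

open scoped Classical in
/-- The (finite) set of horizontal `n`-ribbon strip tilings of the skew shape
`lam / μ`. -/
noncomputable def horizontalTilings (n : ℕ) (μ lam : YoungDiagram) :
    Finset (Finset (Finset (ℕ × ℕ))) :=
  ((lam.cells \ μ.cells).powerset.powerset).filter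
    (IsHorizontalTiling n (lam.cells \ μ.cells))

open scoped Classical in
/-- The (finite) set of vertical `n`-ribbon strip tilings of the skew shape `lam / μ`. -/
noncomputable def verticalTilings (n : ℕ) (μ lam : YoungDiagram) :
    Finset (Finset (Finset (ℕ × ℕ))) :=
  ((lam.cells \ μ.cells).powerset.powerset).filter
    (IsVerticalTiling n (lam.cells \ μ.cells))

/-- The total spin of a set of ribbons. -/
def tilesSpin (tiles : Finset (Finset (ℕ × ℕ))) : ℕ :=
  ∑ t ∈ tiles, spin t

end SuperLLT


namespace SuperLLT

/-! ### Ribbons as lattice paths -/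

/-- The cells of the path that occupies the `n` consecutive diagonals `m, …, m + n - 1`, in row
`ρ k` on diagonal `k`.  Diagonals are numbered by shifted content: the cell `(i, j)` with `i < N`
lies on diagonal `j + N - i`. -/
def pathCells (N n m : ℕ) (ρ : ℕ → ℕ) : Finset (ℕ × ℕ) :=
  (Ico m (m + n)).image fun k => (ρ k, ρ k + k - N)

/-- The row function `ρ` describes a path on the diagonals `m, …, m + n - 1` which stays inside
the quadrant, within the first `N` rows, and whose steps go one cell north or one cell east. -/
structure NEPath (N n m : ℕ) (ρ : ℕ → ℕ) : Prop where
  lt : ∀ k, m ≤ k → k < m + n → ρ k < N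
  le_add : ∀ k, m ≤ k → k < m + n → N ≤ ρ k + k
  step : ∀ k, m ≤ k → k + 1 < m + n → ρ (k + 1) ≤ ρ k ∧ ρ k ≤ ρ (k + 1) + 1

variable {N n m : ℕ} {ρ : ℕ → ℕ}

lemma NEPath.mem_iff (h : NEPath N n m ρ) (i j : ℕ) :
    (i, j) ∈ pathCells N n m ρ ↔ ∃ k, m ≤ k ∧ k < m + n ∧ ρ k = i ∧ j + N = i + k := by
  simp only [pathCells, Finset.mem_image, Finset.mem_Ico, Prod.mk.injEq]
  constructor
  · rintro ⟨k, ⟨h1, h2⟩, h3, h4⟩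
    have := h.le_add k h1 h2
    exact ⟨k, h1, h2, h3, by omega⟩
  · rintro ⟨k, h1, h2, h3, h4⟩
    exact ⟨k, ⟨h1, h2⟩, h3, by omega⟩

lemma NEPath.antitone (h : NEPath N n m ρ) {k l : ℕ} (hk : m ≤ k) (hkl : k ≤ l)
    (hl : l < m + n) : ρ l ≤ ρ k ∧ ρ k ≤ ρ l + (l - k) := by
  induction l, hkl using Nat.le_induction with
  | base => simp
  | succ l hkl ih =>
    have := ih (by omega)
    have := h.step l (by omega) hl
    omega

/-- An order-convex finite set of cells is a skew shape: it is the difference of its lower closure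
and the part of the lower closure outside it. -/
lemma isSkewCells_of_convex (s : Finset (ℕ × ℕ))
    (hs : ∀ a ∈ s, ∀ b ∈ s, ∀ c, a ≤ c → c ≤ b → c ∈ s) : IsSkewCells s := by
  classical
  let L : Finset (ℕ × ℕ) := s.biUnion fun a => Finset.Iic a
  have hL : ∀ c, c ∈ L ↔ ∃ a ∈ s, c ≤ a := by
    intro c; simp [L]
  refine ⟨⟨L \ s, ?_⟩, ⟨L, ?_⟩, ?_, ?_⟩
  · intro a b hba ha
    simp only [Finset.coe_sdiff, Set.mem_sdiff, Finset.mem_coe, hL] at ha ⊢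
    obtain ⟨⟨e, he, hae⟩, ha'⟩ := ha
    exact ⟨⟨e, he, hba.trans hae⟩, fun hb => ha' (hs b hb e he a hba hae)⟩
  · intro a b hba ha
    simp only [Finset.mem_coe, hL] at ha ⊢
    obtain ⟨e, he, hae⟩ := ha
    exact ⟨e, he, hba.trans hae⟩
  · intro c hc
    exact (Finset.mem_sdiff.1 hc).1
  · ext c
    simp only [Finset.mem_sdiff, not_and, not_not]
    constructor
    · intro hc
      exact ⟨(hL c).2 ⟨c, hc, le_rfl⟩, fun _ => hc⟩
    · rintro ⟨h1, h2⟩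
      exact h2 h1

lemma NEPath.card (h : NEPath N n m ρ) : (pathCells N n m ρ).card = n := by
  rw [pathCells, Finset.card_image_of_injOn, Nat.card_Ico]
  · omega
  · intro k hk l hl hkl
    simp only [Finset.coe_Ico, Set.mem_Ico, Prod.mk.injEq] at hk hl hkl
    have := h.le_add k hk.1 hk.2
    have := h.le_add l hl.1 hl.2
    omega

lemma NEPath.isRibbon (h : NEPath N n m ρ) : IsRibbon n (pathCells N n m ρ) := by
  refine ⟨h.card, ?_, ?_, ?_⟩
  · apply isSkewCells_of_convex
    rintro ⟨a1, a2⟩ ha ⟨b1, b2⟩ hb ⟨c1, c2⟩ ⟨hac1, hac2⟩ ⟨hcb1, hcb2⟩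
    rw [h.mem_iff] at *
    obtain ⟨k, k1, k2, k3, k4⟩ := ha
    obtain ⟨l, l1, l2, l3, l4⟩ := hb
    simp only at hac1 hac2 hcb1 hcb2
    rcases le_total k l with hkl | hkl
    · have := h.antitone k1 hkl l2
      have := h.antitone k1 (l := c2 + N - c1) (by omega) (by omega)
      have := h.antitone (k := c2 + N - c1) (l := l) (by omega) (by omega) (by omega)
      have := h.lt k k1 k2
      exact ⟨c2 + N - c1, by omega, by omega, by omega, by omega⟩
    · have := h.antitone l1 hkl k2
      have := h.antitone l1 (l := c2 + N - c1) (by omega) (by omega)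
      have := h.antitone (k := c2 + N - c1) (l := k) (by omega) (by omega) (by omega)
      have := h.lt k k1 k2
      exact ⟨c2 + N - c1, by omega, by omega, by omega, by omega⟩
  · have hmem : ∀ k, m ≤ k → k < m + n → (ρ k, ρ k + k - N) ∈ pathCells N n m ρ := by
      intro k h1 h2
      exact Finset.mem_image_of_mem _ (Finset.mem_Ico.2 ⟨h1, h2⟩)
    set S := pathCells N n m ρ with hS
    have key : ∀ k, m ≤ k → k < m + n →
        Relation.ReflTransGen (fun a b => a ∈ S ∧ b ∈ S ∧ Adj a b)
          (ρ m, ρ m + m - N) (ρ k, ρ k + k - N) := by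
      intro k hk
      induction k, hk using Nat.le_induction with
      | base => intro _; exact .refl
      | succ k hk ih =>
        intro hlt
        refine (ih (by omega)).tail ⟨hmem k hk (by omega), hmem _ (by omega) hlt, ?_⟩
        have := h.step k hk hlt
        have := h.le_add k hk (by omega)
        have := h.le_add (k + 1) (by omega) (by omega)
        simp only [Adj]
        omega
    have hsymm : Std.Symm (fun a b => a ∈ S ∧ b ∈ S ∧ Adj a b) := by
      constructor
      rintro a b ⟨h1, h2, h3⟩
      refine ⟨h2, h1, ?_⟩
      simp only [Adj] at h3 ⊢
      omega
    intro c hc d hd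
    obtain ⟨k, hk, rfl⟩ := Finset.mem_image.1 hc
    obtain ⟨l, hl, rfl⟩ := Finset.mem_image.1 hd
    rw [Finset.mem_Ico] at hk hl
    exact ((Relation.ReflTransGen.stdSymm (r := fun a b => a ∈ S ∧ b ∈ S ∧ Adj a b)).symm _ _ (key k hk.1 hk.2)).trans (key l hl.1 hl.2)
  · rintro i j ⟨h1, -, -, h2⟩
    rw [h.mem_iff] at h1 h2
    obtain ⟨k, k1, k2, k3, k4⟩ := h1
    obtain ⟨l, l1, l2, l3, l4⟩ := h2
    obtain rfl : k = l := by omega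
    omega

lemma NEPath.image_fst (h : NEPath N n m ρ) (hn : 1 ≤ n) :
    (pathCells N n m ρ).image Prod.fst = Icc (ρ (m + n - 1)) (ρ m) := by
  ext i
  simp only [Finset.mem_image, Prod.exists, exists_and_right, exists_eq_right, Finset.mem_Icc]
  constructor
  · rintro ⟨j, hj⟩
    obtain ⟨k, k1, k2, k3, k4⟩ := (h.mem_iff _ _).1 hj
    have := h.antitone le_rfl k1 k2
    have := h.antitone k1 (l := m + n - 1) (by omega) (by omega)
    omega
  · -- a discrete intermediate value argument along the path
    rintro ⟨h1, h2⟩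
    have key : ∀ l, m ≤ l → l < m + n → ρ l ≤ i → ∃ k, m ≤ k ∧ k ≤ l ∧ ρ k = i := by
      intro l hl
      induction l, hl using Nat.le_induction with
      | base => intro _ h3; exact ⟨m, le_rfl, le_rfl, by omega⟩
      | succ l hl ih =>
        intro h3 h4
        have := h.step l hl h3
        by_cases h5 : ρ (l + 1) = i
        · exact ⟨l + 1, by omega, le_rfl, h5⟩
        · obtain ⟨k, k1, k2, k3⟩ := ih (by omega) (by omega)
          exact ⟨k, k1, by omega, k3⟩
    obtain ⟨k, k1, k2, k3⟩ := key (m + n - 1) (by omega) (by omega) h1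
    have := h.le_add k k1 (by omega)
    exact ⟨ρ k + k - N, (h.mem_iff _ _).2 ⟨k, k1, by omega, k3, by omega⟩⟩

lemma NEPath.spin_eq (h : NEPath N n m ρ) (hn : 1 ≤ n) :
    spin (pathCells N n m ρ) = ρ m - ρ (m + n - 1) := by
  have := h.antitone le_rfl (l := m + n - 1) (by omega) (by omega)
  rw [spin, h.image_fst hn, Nat.card_Icc]
  omega

lemma max_getD {s : Finset ℕ} {a : ℕ} (ha : a ∈ s) (h : ∀ b ∈ s, b ≤ a) : s.max.getD 0 = a := by
  have : s.max = (a : WithBot ℕ) :=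
    le_antisymm (Finset.max_le fun b hb => WithBot.coe_le_coe.2 (h b hb)) (Finset.le_max ha)
  rw [this]; rfl

lemma min_getD {s : Finset ℕ} {a : ℕ} (ha : a ∈ s) (h : ∀ b ∈ s, a ≤ b) : s.min.getD 0 = a := by
  have : s.min = (a : WithTop ℕ) :=
    le_antisymm (Finset.min_le ha) (Finset.le_min fun b hb => WithTop.coe_le_coe.2 (h b hb))
  rw [this]; rfl

lemma NEPath.bottomLeft_eq (h : NEPath N n m ρ) (hn : 1 ≤ n) :
    bottomLeft (pathCells N n m ρ) = (ρ m, ρ m + m - N) := by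
  have h0 := h.le_add m le_rfl (by omega)
  have h1 : ((pathCells N n m ρ).image Prod.fst).max.getD 0 = ρ m := by
    rw [h.image_fst hn]
    have := h.antitone le_rfl (l := m + n - 1) (by omega) (by omega)
    apply max_getD <;> simp; omega
  rw [bottomLeft, h1]
  congr 1
  apply min_getD
  · simp only [Finset.mem_image, Finset.mem_filter, Prod.exists, exists_eq_right]
    exact (h.mem_iff _ _).2 ⟨m, le_rfl, by omega, rfl, by omega⟩
  · intro b hb
    simp only [Finset.mem_image, Finset.mem_filter, Prod.exists, exists_eq_right] at hb
    obtain ⟨k, k1, k2, k3, k4⟩ := (h.mem_iff _ _).1 hb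
    omega

lemma IsSkewCells.convex {s : Finset (ℕ × ℕ)} (hs : IsSkewCells s) {a b c : ℕ × ℕ}
    (ha : a ∈ s) (hb : b ∈ s) (hac : a ≤ c) (hcb : c ≤ b) : c ∈ s := by
  obtain ⟨μ, lam, -, rfl⟩ := hs
  rw [Finset.mem_sdiff] at *
  exact ⟨lam.isLowerSet hcb hb.1, fun hc => ha.2 (μ.isLowerSet hac hc)⟩

/-- A path of adjacent cells crosses from each diagonal to the next one between its endpoints. -/
lemma exists_crossing {s : Finset (ℕ × ℕ)} (hN : ∀ c ∈ s, c.1 < N) {c d : ℕ × ℕ}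
    (hcd : Relation.ReflTransGen (fun a b => a ∈ s ∧ b ∈ s ∧ Adj a b) c d) (k : ℕ)
    (h1 : c.2 + N - c.1 ≤ k) (h2 : k < d.2 + N - d.1) :
    ∃ a ∈ s, ∃ b ∈ s, Adj a b ∧ a.2 + N - a.1 = k ∧ b.2 + N - b.1 = k + 1 := by
  induction hcd with
  | refl => omega
  | @tail a b _ hab ih =>
    by_cases h3 : k < a.2 + N - a.1
    · exact ih h3
    · refine ⟨a, hab.1, b, hab.2.1, hab.2.2, ?_⟩
      have := hab.2.2
      have := hN a hab.1
      have := hN b hab.2.1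
      simp only [Adj] at *
      omega

/-- Every ribbon is the cell set of a north-east path. -/
lemma IsRibbon.exists_path {s : Finset (ℕ × ℕ)} (hs : IsRibbon n s) (hn : 1 ≤ n)
    (hN : ∀ c ∈ s, c.1 < N) : ∃ m ρ, NEPath N n m ρ ∧ s = pathCells N n m ρ := by
  obtain ⟨hcard, hskew, hconn, h22⟩ := hs
  let κ : ℕ × ℕ → ℕ := fun c => c.2 + N - c.1
  have hκ : ∀ c, κ c = c.2 + N - c.1 := fun _ => rfl
  -- two cells on one diagonal span a rectangle inside `s`, which contains a 2×2 square
  have hlt : ∀ a ∈ s, ∀ b ∈ s, κ a = κ b → ¬ a.1 < b.1 := by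
    rintro ⟨a1, a2⟩ ha ⟨b1, b2⟩ hb hab hlt
    have h1 := hN _ ha
    have h2 := hN _ hb
    simp only [hκ] at hab hlt h1 h2
    refine h22 a1 a2 ⟨ha, ?_, ?_, ?_⟩ <;> refine hskew.convex ha hb ?_ ?_ <;>
      simp only [Prod.mk_le_mk] <;> omega
  have hinj : ∀ a ∈ s, ∀ b ∈ s, κ a = κ b → a = b := by
    intro a ha b hb hab
    have h1 := hlt a ha b hb hab
    have h2 := hlt b hb a ha hab.symm
    have h3 := hN a ha
    have h4 := hN b hb
    simp only [hκ] at hab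
    ext <;> omega
  have hne : s.Nonempty := by
    rw [← Finset.card_pos]; omega
  obtain ⟨c0, hc0, hmin⟩ := s.exists_min_image κ hne
  obtain ⟨c1, hc1, hmax⟩ := s.exists_max_image κ hne
  have himg : s.image κ = Icc (κ c0) (κ c1) := by
    ext k
    simp only [Finset.mem_image, Finset.mem_Icc]
    constructor
    · rintro ⟨c, hc, rfl⟩
      exact ⟨hmin c hc, hmax c hc⟩
    · rintro ⟨h1, h2⟩
      rcases h2.eq_or_lt with rfl | h2
      · exact ⟨c1, hc1, rfl⟩
      · obtain ⟨a, ha, -, -, -, h3, -⟩ := exists_crossing hN (hconn c0 hc0 c1 hc1) k h1 h2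
        exact ⟨a, ha, h3⟩
  have hc01 : κ c1 + 1 = κ c0 + n := by
    have h1 : (s.image κ).card = n := by
      rw [Finset.card_image_of_injOn (fun a ha b hb h => hinj a ha b hb h), hcard]
    rw [himg, Nat.card_Icc] at h1
    have := hmin c1 hc1
    omega
  have hex : ∀ k, ∃ c, κ c0 ≤ k → k < κ c0 + n → c ∈ s ∧ κ c = k := by
    intro k
    by_cases h : κ c0 ≤ k ∧ k < κ c0 + n
    · have : k ∈ s.image κ := by rw [himg, Finset.mem_Icc]; omega
      obtain ⟨c, hc⟩ := Finset.mem_image.1 this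
      exact ⟨c, fun _ _ => hc⟩
    · exact ⟨(0, 0), fun h1 h2 => absurd ⟨h1, h2⟩ h⟩
  choose f hf using hex
  have hpath : NEPath N n (κ c0) (fun k => (f k).1) := by
    refine ⟨fun k h1 h2 => hN _ (hf k h1 h2).1, fun k h1 h2 => ?_, fun k h1 h2 => ?_⟩
    · have h3 := hf k h1 h2
      have := hN _ h3.1
      simp only [hκ (f k)] at h3
      omega
    · obtain ⟨a, ha, b, hb, hab, h3, h4⟩ :=
        exists_crossing hN (hconn c0 hc0 c1 hc1) k h1 (by rw [← hκ]; omega)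
      have h5 := hf k h1 (by omega)
      have h6 := hf (k + 1) (by omega) h2
      rw [hinj _ h5.1 a ha (h5.2.trans h3.symm), hinj _ h6.1 b hb (h6.2.trans h4.symm)]
      have := hN a ha
      have := hN b hb
      simp only [Adj] at hab
      omega
  refine ⟨κ c0, fun k => (f k).1, hpath, ?_⟩
  ext ⟨i, j⟩
  rw [hpath.mem_iff]
  constructor
  · intro hc
    have h1 : κ (i, j) ∈ s.image κ := Finset.mem_image_of_mem _ hc
    rw [himg, Finset.mem_Icc] at h1
    have h2 := hf (κ (i, j)) h1.1 (by omega)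
    have h3 := hinj _ h2.1 _ hc h2.2
    have h4 := hN _ hc
    refine ⟨κ (i, j), h1.1, by omega, by rw [h3], ?_⟩
    simp only [hκ] at h4 ⊢
    omega
  · rintro ⟨k, h1, h2, h3, h4⟩
    have h5 := hf k h1 h2
    have h6 := hN _ h5.1
    have h7 : f k = (i, j) := by
      have h8 := h5.2
      simp only [hκ] at h8
      ext <;> omega
    rw [← h7]
    exact h5.1

end SuperLLT

namespace SuperLLT

/-! ### Bead configurations -/

/-- The bead positions of the partition `ν` padded to `N` parts: the parts of `ν + ρ`. -/
def beads (ν : YoungDiagram) (N : ℕ) : Finset ℕ :=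
  (Finset.range N).image fun t => ν.rowLen t + (N - t)

/-- The number of elements of `S` greater than `k`. -/
def cnt (S : Finset ℕ) (k : ℕ) : ℕ := (S.filter (k < ·)).card

lemma cnt_succ (S : Finset ℕ) (k : ℕ) :
    cnt S k = cnt S (k + 1) + if k + 1 ∈ S then 1 else 0 := by
  have h1 : S.filter (k < ·) = S.filter (k + 1 < ·) ∪ S.filter (k + 1 = ·) := by
    ext x; simp only [Finset.mem_filter, Finset.mem_union]; grind
  have h2 : Disjoint (S.filter (k + 1 < ·)) (S.filter (k + 1 = ·)) := by
    rw [Finset.disjoint_filter]; intro x _ h; omega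
  rw [cnt, h1, Finset.card_union_of_disjoint h2, cnt, Finset.filter_eq]
  split_ifs <;> simp

/-- `M` is a set of jumping beads taking `A` to `B`: every bead in `M` jumps `n` places to the
right.  The result is recorded by the number of beads beyond each position `k`, which grows by
one for every bead jumping over the gap between `k` and `k + 1`. -/
def ValidJump (n : ℕ) (A B M : Finset ℕ) : Prop :=
  M ⊆ A ∧ ∀ k, cnt B k = cnt A k + (M.filter fun m => m ≤ k ∧ k < m + n).card

lemma mem_shift {n k : ℕ} {M : Finset ℕ} : k ∈ M.image (· + n) ↔ n ≤ k ∧ k - n ∈ M := by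
  simp only [Finset.mem_image]
  constructor
  · rintro ⟨m, hm, rfl⟩; simp [hm]
  · rintro ⟨h1, h2⟩; exact ⟨_, h2, by omega⟩

lemma card_active (n k : ℕ) (M : Finset ℕ) :
    cnt (M.image (· + n)) k = (M.filter fun m => m ≤ k ∧ k < m + n).card + cnt M k := by
  have h1 : (M.image (· + n)).filter (k < ·) = (M.filter (k < · + n)).image (· + n) := by
    rw [Finset.filter_image]
  have h2 : M.filter (k < · + n) = (M.filter fun m => m ≤ k ∧ k < m + n) ∪ M.filter (k < ·) := by
    ext x; simp only [Finset.mem_filter, Finset.mem_union]; grind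
  have h3 : Disjoint (M.filter fun m => m ≤ k ∧ k < m + n) (M.filter (k < ·)) := by
    rw [Finset.disjoint_filter]; intro x _ h; omega
  rw [cnt, h1, Finset.card_image_of_injective _ (add_left_injective n), h2,
    Finset.card_union_of_disjoint h3, cnt]

/-- In terms of indicator functions, a valid jump satisfies `B + M = A + (M + n)`. -/
lemma validJump_iff {n : ℕ} {A B M : Finset ℕ} (hA : 0 ∉ A) (hB : 0 ∉ B) (hn : 1 ≤ n) :
    ValidJump n A B M ↔ M ⊆ A ∧ ∀ k, ((if k ∈ B then 1 else 0) + if k ∈ M then 1 else 0) =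
      (if k ∈ A then 1 else 0) + if k ∈ M.image (· + n) then 1 else 0 := by
  refine and_congr_right fun hMA => ?_
  have hM : 0 ∉ M := fun h => hA (hMA h)
  have h0 : ∀ k, cnt B k = cnt A k + (M.filter fun m => m ≤ k ∧ k < m + n).card ↔
      cnt B k + cnt M k = cnt A k + cnt (M.image (· + n)) k := by
    intro k
    rw [card_active]
    omega
  simp only [h0]
  constructor
  · intro h k
    rcases k with _ | k
    · have : 0 ∉ M.image (· + n) := by rw [mem_shift]; omega
      simp [hA, hB, hM, this]
    · have h1 := h k
      have h2 := h (k + 1)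
      rw [cnt_succ B, cnt_succ M, cnt_succ A, cnt_succ (M.image (· + n))] at h1
      omega
  · intro h
    -- all counts vanish beyond `K`; descend from there
    obtain ⟨K, hK⟩ : ∃ K, ∀ x ∈ B ∪ M ∪ A ∪ M.image (· + n), x ≤ K :=
      ⟨_, fun x hx => Finset.le_sup (f := id) hx⟩
    have hz : ∀ S ⊆ B ∪ M ∪ A ∪ M.image (· + n), ∀ k, K ≤ k → cnt S k = 0 := by
      intro S hS k hk
      rw [cnt, Finset.card_eq_zero, Finset.filter_eq_empty_iff]
      intro x hx
      have := hK x (hS hx)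
      omega
    have key : ∀ d k, K ≤ k + d →
        cnt B k + cnt M k = cnt A k + cnt (M.image (· + n)) k := by
      intro d
      induction d with
      | zero =>
        intro k hk
        rw [hz B (by grind) k hk, hz M (by grind) k hk, hz A (by grind) k hk,
          hz (M.image (· + n)) (by grind) k hk]
      | succ d ih =>
        intro k hk
        have h1 := ih (k + 1) (by omega)
        have h2 := h (k + 1)
        rw [cnt_succ B, cnt_succ M, cnt_succ A, cnt_succ (M.image (· + n))]
        omega
    exact fun k => key K k (by omega)

/-- The set of jumping beads is determined by the two configurations, position by position from
the left. -/
lemma ValidJump.unique {n : ℕ} {A B M M' : Finset ℕ} (hA : 0 ∉ A) (hB : 0 ∉ B) (hn : 1 ≤ n)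
    (h : ValidJump n A B M) (h' : ValidJump n A B M') : M = M' := by
  rw [validJump_iff hA hB hn] at h h'
  ext k
  induction k using Nat.strong_induction_on with
  | _ k ih =>
    have h1 := h.2 k
    have h2 := h'.2 k
    have h3 : k ∈ M.image (· + n) ↔ k ∈ M'.image (· + n) := by
      rw [mem_shift, mem_shift]
      refine and_congr_right fun hk => ih _ (by omega)
    simp only [h3] at h1
    split_ifs at h1 h2 <;> first | omega | simp_all

section beads

variable (ν : YoungDiagram) (N : ℕ)

lemma lt_cnt_beads {i : ℕ} (hi : i < N) (k : ℕ) :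
    i < cnt (beads ν N) k ↔ k < ν.rowLen i + (N - i) := by
  constructor
  · intro h
    by_contra! hk
    have hsub : (beads ν N).filter (k < ·) ⊆
        (Finset.range i).image fun t => ν.rowLen t + (N - t) := by
      intro x hx
      simp only [beads, Finset.mem_filter, Finset.mem_image, Finset.mem_range] at hx ⊢
      obtain ⟨⟨t, ht, rfl⟩, hx⟩ := hx
      refine ⟨t, ?_, rfl⟩
      by_contra! hit
      have := ν.rowLen_anti i t hit
      omega
    have h1 := Finset.card_le_card hsub
    have h2 : ((Finset.range i).image fun t => ν.rowLen t + (N - t)).card ≤ i := by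
      simpa using Finset.card_image_le (s := Finset.range i)
        (f := fun t => ν.rowLen t + (N - t))
    rw [cnt] at h
    omega
  · intro hk
    have hsub : ((Finset.range (i + 1)).image fun t => ν.rowLen t + (N - t)) ⊆
        (beads ν N).filter (k < ·) := by
      intro x hx
      simp only [beads, Finset.mem_filter, Finset.mem_image, Finset.mem_range] at hx ⊢
      obtain ⟨t, ht, rfl⟩ := hx
      refine ⟨⟨t, by omega, rfl⟩, ?_⟩
      have := ν.rowLen_anti t i (by omega)
      omega
    have h1 := Finset.card_le_card hsub
    rw [Finset.card_image_of_injOn, Finset.card_range] at h1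
    · exact h1
    · intro s hs t ht hst
      simp only [Finset.coe_range, Set.mem_Iio] at hs ht hst
      rcases lt_trichotomy s t with h | h | h
      · have := ν.rowLen_anti s t h.le
        omega
      · exact h
      · have := ν.rowLen_anti t s h.le
        omega

lemma cnt_beads_le (k : ℕ) : cnt (beads ν N) k ≤ N :=
  (Finset.card_le_card (Finset.filter_subset _ _)).trans <| by
    simpa [beads] using Finset.card_image_le (s := Finset.range N)
      (f := fun t => ν.rowLen t + (N - t))

/-- The bead of row `i` has exactly `i` beads to its right. -/
lemma cnt_bead {i : ℕ} (hi : i < N) : cnt (beads ν N) (ν.rowLen i + (N - i)) = i := by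
  apply le_antisymm
  · by_contra! h
    have := (lt_cnt_beads ν N hi _).1 h
    omega
  · rcases i with _ | i
    · omega
    · refine (lt_cnt_beads ν N (by omega) _).2 ?_
      have := ν.rowLen_anti i (i + 1) (by omega)
      omega

/-- A cell of the first `N` rows lies in `ν` iff its row is less than the number of beads beyond
its diagonal. -/
lemma mem_iff_lt_cnt {i j : ℕ} (hi : i < N) :
    (i, j) ∈ ν ↔ i < cnt (beads ν N) (j + N - i) := by
  rw [lt_cnt_beads ν N hi, YoungDiagram.mem_iff_lt_rowLen]
  omega

lemma zero_notMem_beads : 0 ∉ beads ν N := by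
  simp only [beads, Finset.mem_image, Finset.mem_range, not_exists, not_and]
  intro t ht
  omega

lemma mem_beads {m : ℕ} : m ∈ beads ν N ↔ ∃ i < N, ν.rowLen i + (N - i) = m := by
  simp [beads]

end beads

/-! ### The ribbon strip of a set of jumping beads -/

/-- The row in which the ribbon of the jumping bead `m` meets diagonal `k`: the number of beads
beyond `k` at the time when `m` jumps, the beads of `M` to the right of `m` having jumped
before. -/
def ribRow (A M : Finset ℕ) (m k : ℕ) : ℕ :=
  cnt A k + (M.filter fun x => m < x ∧ x ≤ k).card

/-- The strip of ribbons swept out by the jumping beads `M`. -/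
def stripOf (N n : ℕ) (A M : Finset ℕ) : Finset (Finset (ℕ × ℕ)) :=
  M.image fun m => pathCells N n m (ribRow A M m)

lemma ribRow_self (A M : Finset ℕ) (m : ℕ) : ribRow A M m m = cnt A m := by
  have : (M.filter fun x => m < x ∧ x ≤ m) = ∅ := by
    rw [Finset.filter_eq_empty_iff]; intro x _; omega
  rw [ribRow, this]; simp

lemma ribRow_succ (A M : Finset ℕ) {m k : ℕ} (hk : m ≤ k) :
    ribRow A M m (k + 1) + (if k + 1 ∈ A then 1 else 0) =
      ribRow A M m k + if k + 1 ∈ M then 1 else 0 := by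
  have h1 : (M.filter fun x => m < x ∧ x ≤ k + 1) =
      (M.filter fun x => m < x ∧ x ≤ k) ∪ M.filter (k + 1 = ·) := by
    ext x; simp only [Finset.mem_filter, Finset.mem_union]; grind
  have h2 : Disjoint (M.filter fun x => m < x ∧ x ≤ k) (M.filter (k + 1 = ·)) := by
    rw [Finset.disjoint_filter]; intro x _ h; omega
  have h3 : (M.filter (k + 1 = ·)).card = if k + 1 ∈ M then 1 else 0 := by
    rw [Finset.filter_eq]; split_ifs <;> simp
  rw [ribRow, h1, Finset.card_union_of_disjoint h2, h3, ribRow, cnt_succ A k]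
  omega

/-- A bead nearer to the right has its ribbon nearer to the north-west. -/
lemma ribRow_lt (A M : Finset ℕ) {m m' k : ℕ} (hm' : m' ∈ M) (h1 : m < m') (h2 : m' ≤ k) :
    ribRow A M m' k < ribRow A M m k := by
  refine Nat.add_lt_add_left (Finset.card_lt_card ?_) _
  rw [Finset.ssubset_iff_of_subset]
  · exact ⟨m', by simp [hm', h1, h2], by simp⟩
  · intro x
    simp only [Finset.mem_filter]
    grind

section strip

variable {N n : ℕ} {μ lam : YoungDiagram} {M : Finset ℕ}

lemma nePath_ribRow (hM : M ⊆ beads μ N) {m : ℕ} (hm : m ∈ M) :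
    NEPath N n m (ribRow (beads μ N) M m) := by
  obtain ⟨i, hi, hmi⟩ := (mem_beads μ N).1 (hM hm)
  have hstart : ribRow (beads μ N) M m m = i := by rw [ribRow_self, ← hmi, cnt_bead μ N hi]
  have hstep : ∀ k, m ≤ k → ribRow (beads μ N) M m (k + 1) ≤ ribRow (beads μ N) M m k ∧
      ribRow (beads μ N) M m k ≤ ribRow (beads μ N) M m (k + 1) + 1 := by
    intro k hk
    have h1 := ribRow_succ (beads μ N) M hk
    have h2 := @hM (k + 1)
    split_ifs at h1 <;> first | omega | (exfalso; tauto)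
  have hall : ∀ k, m ≤ k → ribRow (beads μ N) M m k < N ∧ N ≤ ribRow (beads μ N) M m k + k := by
    intro k hk
    induction k, hk using Nat.le_induction with
    | base => omega
    | succ k hk ih =>
      have := hstep k hk
      omega
  exact ⟨fun k hk _ => (hall k hk).1, fun k hk _ => (hall k hk).2, fun k hk _ => hstep k hk⟩

lemma mem_skew_iff (hN : lam.colLen 0 ≤ N) {i j : ℕ} :
    (i, j) ∈ lam.cells \ μ.cells ↔ i < N ∧ cnt (beads μ N) (j + N - i) ≤ i ∧
      i < cnt (beads lam N) (j + N - i) := by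
  rw [Finset.mem_sdiff, YoungDiagram.mem_cells, YoungDiagram.mem_cells]
  by_cases hi : i < N
  · rw [mem_iff_lt_cnt _ N hi, mem_iff_lt_cnt _ N hi]
    omega
  · constructor
    · rintro ⟨h, -⟩
      have h1 : (i, 0) ∈ lam := lam.up_left_mem le_rfl (Nat.zero_le j) h
      rw [YoungDiagram.mem_iff_lt_colLen] at h1
      omega
    · intro h
      exact absurd h.1 hi

/-- In a finite set of numbers there is one with any prescribed smaller-than-cardinality number of
elements above it. -/
lemma exists_rank (S : Finset ℕ) {r : ℕ} (hr : r < S.card) :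
    ∃ m ∈ S, (S.filter (m < ·)).card = r := by
  have hmaps : Set.MapsTo (fun m => (S.filter (m < ·)).card) S (Finset.range S.card) := by
    intro m hm
    simp only [Finset.coe_range, Set.mem_Iio]
    apply Finset.card_lt_card
    rw [Finset.ssubset_iff_of_subset (Finset.filter_subset _ _)]
    exact ⟨m, hm, by simp⟩
  have hlt : ∀ a ∈ S, ∀ b ∈ S, a < b → (S.filter (b < ·)).card < (S.filter (a < ·)).card := by
    intro a _ b hb hab
    apply Finset.card_lt_card
    rw [Finset.ssubset_iff_of_subset]
    · exact ⟨b, by simp [hb, hab], by simp⟩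
    · intro x
      simp only [Finset.mem_filter]
      grind
  have hinj : Set.InjOn (fun m => (S.filter (m < ·)).card) S := by
    intro a ha b hb hab
    simp only at hab
    rcases lt_trichotomy a b with h | h | h
    · have := hlt a ha b hb h
      omega
    · exact h
    · have := hlt b hb a ha h
      omega
  obtain ⟨m, hm, h⟩ := Finset.surjOn_of_injOn_of_card_le _ hmaps hinj (by simp)
    (Finset.mem_coe.2 (Finset.mem_range.2 hr))
  exact ⟨m, hm, h⟩

lemma stripTile_disjoint (hM : M ⊆ beads μ N) {m m' : ℕ} (hm : m ∈ M) (hm' : m' ∈ M)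
    (h : m < m') : Disjoint (pathCells N n m (ribRow (beads μ N) M m))
      (pathCells N n m' (ribRow (beads μ N) M m')) := by
  rw [Finset.disjoint_left]
  rintro ⟨i, j⟩ h1 h2
  obtain ⟨k, k1, k2, k3, k4⟩ := ((nePath_ribRow hM hm).mem_iff _ _).1 h1
  obtain ⟨l, l1, l2, l3, l4⟩ := ((nePath_ribRow hM hm').mem_iff _ _).1 h2
  obtain rfl : k = l := by omega
  have := ribRow_lt (beads μ N) M hm' h l1
  omega

lemma stripTile_injOn (hn : 1 ≤ n) (hM : M ⊆ beads μ N) :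
    Set.InjOn (fun m => pathCells N n m (ribRow (beads μ N) M m)) M := by
  have hne : ∀ m ∈ M, ∀ m' ∈ M, m < m' → pathCells N n m (ribRow (beads μ N) M m) ≠
      pathCells N n m' (ribRow (beads μ N) M m') := by
    intro m hm m' hm' hlt heq
    have h1 := stripTile_disjoint (n := n) hM hm hm' hlt
    rw [heq, disjoint_self, Finset.bot_eq_empty, ← Finset.card_eq_zero,
      (nePath_ribRow hM hm').card] at h1
    omega
  intro m hm m' hm' h
  rcases lt_trichotomy m m' with hlt | hlt | hlt
  · exact absurd h (hne m hm m' hm' hlt)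
  · exact hlt
  · exact absurd h.symm (hne m' hm' m hm hlt)

lemma isVerticalTiling_stripOf (hn : 1 ≤ n) (hN : lam.colLen 0 ≤ N)
    (hM : ValidJump n (beads μ N) (beads lam N) M) :
    IsVerticalTiling n (lam.cells \ μ.cells) (stripOf N n (beads μ N) M) := by
  have hpath := fun m (hm : m ∈ M) => nePath_ribRow (n := n) hM.1 hm
  refine ⟨⟨?_, ?_, ?_⟩, ?_⟩
  · intro t ht
    obtain ⟨m, hm, rfl⟩ := Finset.mem_image.1 ht
    exact (hpath m hm).isRibbon
  · intro t ht t' ht' hne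
    obtain ⟨m, hm, rfl⟩ := Finset.mem_image.1 ht
    obtain ⟨m', hm', rfl⟩ := Finset.mem_image.1 ht'
    rcases lt_trichotomy m m' with hlt | hlt | hlt
    · exact stripTile_disjoint hM.1 hm hm' hlt
    · subst hlt; exact absurd rfl hne
    · exact (stripTile_disjoint hM.1 hm' hm hlt).symm
  · ext ⟨i, j⟩
    rw [mem_skew_iff hN, Finset.mem_sup]
    simp only [stripOf, id, Finset.mem_image, exists_exists_and_eq_and]
    have hk := hM.2 (j + N - i)
    constructor
    · rintro ⟨m, hm, h⟩
      obtain ⟨k, k1, k2, k3, k4⟩ := ((hpath m hm).mem_iff _ _).1 h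
      have h1 := (hpath m hm).lt k k1 k2
      have hki : j + N - i = k := by omega
      rw [hki] at hk ⊢
      refine ⟨by omega, by rw [← k3]; exact Nat.le_add_right _ _, ?_⟩
      rw [hk, ← k3]
      refine Nat.add_lt_add_left (Finset.card_lt_card ?_) _
      rw [Finset.ssubset_iff_of_subset]
      · exact ⟨m, by simp only [Finset.mem_filter]; exact ⟨hm, k1, k2⟩, by simp⟩
      · intro x
        simp only [Finset.mem_filter]
        grind
    · rintro ⟨h1, h2, h3⟩
      obtain ⟨m, hm, hr⟩ := exists_rank (M.filter fun m => m ≤ j + N - i ∧ j + N - i < m + n)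
        (r := i - cnt (beads μ N) (j + N - i)) (by omega)
      rw [Finset.mem_filter] at hm
      refine ⟨m, hm.1, ((hpath m hm.1).mem_iff _ _).2
        ⟨j + N - i, hm.2.1, hm.2.2, ?_, by omega⟩⟩
      have hset : (M.filter fun x => m < x ∧ x ≤ j + N - i) =
          (M.filter fun m => m ≤ j + N - i ∧ j + N - i < m + n).filter (m < ·) := by
        ext x; simp only [Finset.mem_filter]; grind
      rw [ribRow, hset, hr]
      omega
  · intro t ht
    obtain ⟨m, hm, rfl⟩ := Finset.mem_image.1 ht
    obtain ⟨i, hi, hmi⟩ := (mem_beads μ N).1 (hM.1 hm)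
    rw [(hpath m hm).bottomLeft_eq hn, ribRow_self, ← hmi, cnt_bead μ N hi, TouchesWest]
    by_cases h0 : μ.rowLen i = 0
    · left; simp only; omega
    · right
      rw [Finset.mem_sdiff, not_and, not_not]
      intro _
      rw [YoungDiagram.mem_cells, YoungDiagram.mem_iff_lt_rowLen]
      simp only
      omega

/-- The spin of the ribbon of `m` is the number of resting beads it jumps over. -/
lemma spin_stripTile (hn : 1 ≤ n) (hM : M ⊆ beads μ N) {m : ℕ} (hm : m ∈ M) :
    spin (pathCells N n m (ribRow (beads μ N) M m)) =
      ((beads μ N \ M).filter fun x => m < x ∧ x < m + n).card := by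
  rw [(nePath_ribRow hM hm).spin_eq hn, ribRow_self, ribRow]
  have h1 : (beads μ N).filter (m < ·) = (beads μ N).filter (m + n - 1 < ·) ∪
      ((M.filter fun x => m < x ∧ x ≤ m + n - 1) ∪
        (beads μ N \ M).filter fun x => m < x ∧ x < m + n) := by
    ext x
    have := @hM x
    simp only [Finset.mem_filter, Finset.mem_union, Finset.mem_sdiff]
    by_cases hx : x ∈ M
    · simp only [hx, this hx, not_true, true_and, false_and, or_false]
      omega
    · simp only [hx, not_false_eq_true, and_true, false_and, false_or]
      by_cases hx' : x ∈ beads μ N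
      · simp only [hx', true_and]; omega
      · simp [hx']
  have h2 : Disjoint (M.filter fun x => m < x ∧ x ≤ m + n - 1)
      ((beads μ N \ M).filter fun x => m < x ∧ x < m + n) := by
    rw [Finset.disjoint_left]
    intro x hx hx'
    simp only [Finset.mem_filter, Finset.mem_sdiff] at hx hx'
    exact hx'.1.2 hx.1
  have h3 : Disjoint ((beads μ N).filter (m + n - 1 < ·))
      ((M.filter fun x => m < x ∧ x ≤ m + n - 1) ∪
        (beads μ N \ M).filter fun x => m < x ∧ x < m + n) := by
    rw [Finset.disjoint_left]
    intro x hx hx'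
    simp only [Finset.mem_filter, Finset.mem_union] at hx hx'
    omega
  rw [cnt, h1, Finset.card_union_of_disjoint h3, Finset.card_union_of_disjoint h2, cnt]
  omega

end strip

end SuperLLT

namespace SuperLLT

/-! ### Every vertical strip comes from jumping beads -/

lemma rowLen_mono {μ lam : YoungDiagram} (h : μ ≤ lam) (i : ℕ) : μ.rowLen i ≤ lam.rowLen i := by
  by_contra! hlt
  have h1 : (i, lam.rowLen i) ∈ lam := h (YoungDiagram.mem_iff_lt_rowLen.2 hlt)
  rw [YoungDiagram.mem_iff_lt_rowLen] at h1
  omega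

lemma cnt_beads_mono {μ lam : YoungDiagram} (h : μ ≤ lam) (N k : ℕ) :
    cnt (beads μ N) k ≤ cnt (beads lam N) k := by
  by_contra! hlt
  have h0 : cnt (beads lam N) k < N := hlt.trans_le (cnt_beads_le μ N k)
  have h1 := (lt_cnt_beads μ N h0 k).1 hlt
  have h2 := rowLen_mono h (cnt (beads lam N) k)
  have h3 := (lt_cnt_beads lam N h0 k).2 (by omega)
  omega

/-- In a vertical strip the bottom-left cells of the ribbons sit at bead positions, so that the
ribbons correspond to a set of jumping beads; on every diagonal the ribbons are stacked in
decreasing order of their starting diagonals, which determines them. -/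
lemma exists_validJump {N n : ℕ} {μ lam : YoungDiagram} (hn : 1 ≤ n) (hμlam : μ ≤ lam)
    (hN : lam.colLen 0 ≤ N) {T : Finset (Finset (ℕ × ℕ))}
    (hT : IsVerticalTiling n (lam.cells \ μ.cells) T) :
    ∃ M, ValidJump n (beads μ N) (beads lam N) M ∧ T = stripOf N n (beads μ N) M := by
  classical
  obtain ⟨⟨hrib, hdis, hsup⟩, hwest⟩ := hT
  have hsub : ∀ t ∈ T, ∀ c ∈ t, c ∈ lam.cells \ μ.cells := by
    intro t ht c hc
    rw [← hsup, Finset.mem_sup]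
    exact ⟨t, ht, hc⟩
  have hex : ∀ t, ∃ m ρ, t ∈ T → NEPath N n m ρ ∧ t = pathCells N n m ρ := by
    intro t
    by_cases ht : t ∈ T
    · obtain ⟨m, ρ, h⟩ := (hrib t ht).exists_path (N := N) hn
        (fun c hc => ((mem_skew_iff hN).1 (hsub t ht c hc)).1)
      exact ⟨m, ρ, fun _ => h⟩
    · exact ⟨0, id, fun h => absurd h ht⟩
  choose m ρ hmρ using hex
  have hpath := fun t ht => (hmρ t ht).1
  have hcell : ∀ t ∈ T, ∀ k, m t ≤ k → k < m t + n → (ρ t k, ρ t k + k - N) ∈ t := by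
    intro t ht k h1 h2
    have h3 := (hpath t ht).le_add k h1 h2
    have h4 := ((hpath t ht).mem_iff (ρ t k) (ρ t k + k - N)).2
      ⟨k, h1, h2, rfl, by omega⟩
    rwa [← (hmρ t ht).2] at h4
  -- the cell of `t` on diagonal `k` lies between the two counts
  have hIco : ∀ t ∈ T, ∀ k, m t ≤ k → k < m t + n →
      cnt (beads μ N) k ≤ ρ t k ∧ ρ t k < cnt (beads lam N) k := by
    intro t ht k h1 h2
    have h3 := (mem_skew_iff hN).1 (hsub t ht _ (hcell t ht k h1 h2))
    have h4 := (hpath t ht).le_add k h1 h2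
    rw [show ρ t k + k - N + N - ρ t k = k by omega] at h3
    exact h3.2
  have htail : ∀ t ∈ T, μ.rowLen (ρ t (m t)) + (N - ρ t (m t)) = m t := by
    intro t ht
    have h1 := hwest t ht
    have h2 := (hpath t ht).bottomLeft_eq hn
    rw [← (hmρ t ht).2] at h2
    rw [h2, TouchesWest] at h1
    have h3 := hsub t ht _ (hcell t ht (m t) le_rfl (by omega))
    have h4 := (hpath t ht).le_add (m t) le_rfl (by omega)
    have h5 := (hpath t ht).lt (m t) le_rfl (by omega)
    rw [Finset.mem_sdiff, YoungDiagram.mem_cells, YoungDiagram.mem_cells,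
      YoungDiagram.mem_iff_lt_rowLen, YoungDiagram.mem_iff_lt_rowLen] at h3
    rw [Finset.mem_sdiff, YoungDiagram.mem_cells, YoungDiagram.mem_cells,
      YoungDiagram.mem_iff_lt_rowLen, YoungDiagram.mem_iff_lt_rowLen] at h1
    simp only at h1
    omega
  have hlt : ∀ t ∈ T, ρ t (m t) < N := fun t ht => (hpath t ht).lt (m t) le_rfl (by omega)
  have hcnt : ∀ t ∈ T, cnt (beads μ N) (m t) = ρ t (m t) := by
    intro t ht
    have := cnt_bead μ N (hlt t ht)
    rwa [htail t ht] at this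
  have heq : ∀ t ∈ T, ∀ t' ∈ T, ∀ k, m t ≤ k → k < m t + n → m t' ≤ k → k < m t' + n →
      ρ t k = ρ t' k → t = t' := by
    intro t ht t' ht' k h1 h2 h3 h4 h5
    by_contra hne
    have h6 := hcell t ht k h1 h2
    rw [h5] at h6
    exact Finset.disjoint_left.1 (hdis t ht t' ht' hne) h6 (hcell t' ht' k h3 h4)
  have hinj : ∀ t ∈ T, ∀ t' ∈ T, m t = m t' → t = t' := by
    intro t ht t' ht' h
    refine heq t ht t' ht' (m t) le_rfl (by omega) (by omega) (by omega) ?_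
    rw [← hcnt t ht, h, hcnt t' ht']
  -- the tail of `t'` is the north-western-most cell of its diagonal, so a ribbon `t` starting
  -- further left passes below it, and disjoint north-east paths cannot change sides
  have horder : ∀ t ∈ T, ∀ t' ∈ T, m t < m t' → ∀ k, m t' ≤ k → k < m t + n →
      ρ t' k < ρ t k := by
    intro t ht t' ht' hmm k hk
    have hne : t ≠ t' := by rintro rfl; omega
    induction k, hk using Nat.le_induction with
    | base =>
      intro h1
      have h2 := (hIco t ht (m t') hmm.le h1).1
      rw [hcnt t' ht'] at h2
      have h3 : ρ t (m t') ≠ ρ t' (m t') :=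
        fun h => hne (heq t ht t' ht' (m t') hmm.le h1 le_rfl (by omega) h)
      omega
    | succ k hk ih =>
      intro h1
      have h2 := ih (by omega)
      have h3 : ρ t (k + 1) ≠ ρ t' (k + 1) :=
        fun h => hne (heq t ht t' ht' (k + 1) (by omega) h1 (by omega) (by omega) h)
      have h4 := (hpath t ht).step k (by omega) h1
      have h5 := (hpath t' ht').step k hk (by omega)
      omega
  have hcover : ∀ k r, cnt (beads μ N) k ≤ r → r < cnt (beads lam N) k →
      ∃ t ∈ T, m t ≤ k ∧ k < m t + n ∧ ρ t k = r := by
    intro k r h1 h2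
    have hr : r < N := h2.trans_le (cnt_beads_le lam N k)
    have h3 : N ≤ r + k := by
      have := mt (lt_cnt_beads μ N hr k).2 (by omega)
      omega
    have h4 : (r, r + k - N) ∈ lam.cells \ μ.cells := by
      rw [mem_skew_iff hN, show r + k - N + N - r = k by omega]
      exact ⟨hr, h1, h2⟩
    rw [← hsup, Finset.mem_sup] at h4
    obtain ⟨t, ht, h5⟩ := h4
    rw [id, (hmρ t ht).2, (hpath t ht).mem_iff] at h5
    obtain ⟨l, l1, l2, l3, l4⟩ := h5
    obtain rfl : l = k := by omega
    exact ⟨t, ht, l1, l2, l3⟩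
  have hcardM : ∀ (p : ℕ → Prop) [DecidablePred p],
      ((T.image m).filter p).card = (T.filter fun t => p (m t)).card := by
    intro p _
    rw [Finset.filter_image, Finset.card_image_of_injOn]
    intro t ht t' ht' h
    exact hinj t (Finset.mem_filter.1 ht).1 t' (Finset.mem_filter.1 ht').1 h
  have hrank : ∀ t ∈ T, ∀ k, m t ≤ k → k < m t + n →
      ρ t k = ribRow (beads μ N) (T.image m) (m t) k := by
    intro t ht k h1 h2
    have himg : (T.filter fun t' => m t < m t' ∧ m t' ≤ k).image (fun t' => ρ t' k) =
        Ico (cnt (beads μ N) k) (ρ t k) := by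
      ext r
      simp only [Finset.mem_image, Finset.mem_filter, Finset.mem_Ico]
      constructor
      · rintro ⟨t', ⟨ht', h3, h4⟩, rfl⟩
        exact ⟨(hIco t' ht' k h4 (by omega)).1, horder t ht t' ht' h3 k h4 h2⟩
      · rintro ⟨h3, h4⟩
        obtain ⟨t', ht', h5, h6, rfl⟩ := hcover k r h3 (h4.trans (hIco t ht k h1 h2).2)
        refine ⟨t', ⟨ht', ?_, h5⟩, rfl⟩
        by_contra! h7
        rcases h7.eq_or_lt with h7 | h7
        · rw [hinj t' ht' t ht h7] at h4
          omega
        · have := horder t' ht' t ht h7 k h1 h6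
          omega
    have h3 := congrArg Finset.card himg
    rw [Finset.card_image_of_injOn, Nat.card_Ico] at h3
    · have := (hIco t ht k h1 h2).1
      rw [ribRow, hcardM, h3]
      omega
    · intro a ha b hb hab
      simp only [Finset.coe_filter, Set.mem_ofPred_eq] at ha hb
      exact heq a ha.1 b hb.1 k ha.2.2 (by omega) hb.2.2 (by omega) hab
  refine ⟨T.image m, ⟨?_, ?_⟩, ?_⟩
  · intro x hx
    obtain ⟨t, ht, rfl⟩ := Finset.mem_image.1 hx
    exact (mem_beads μ N).2 ⟨ρ t (m t), hlt t ht, htail t ht⟩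
  · intro k
    have himg : (T.filter fun t => m t ≤ k ∧ k < m t + n).image (fun t => ρ t k) =
        Ico (cnt (beads μ N) k) (cnt (beads lam N) k) := by
      ext r
      simp only [Finset.mem_image, Finset.mem_filter, Finset.mem_Ico]
      constructor
      · rintro ⟨t, ⟨ht, h1, h2⟩, rfl⟩
        exact hIco t ht k h1 h2
      · rintro ⟨h1, h2⟩
        obtain ⟨t, ht, h3, h4, h5⟩ := hcover k r h1 h2
        exact ⟨t, ⟨ht, h3, h4⟩, h5⟩
    have h1 := congrArg Finset.card himg
    rw [Finset.card_image_of_injOn, Nat.card_Ico] at h1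
    · have := cnt_beads_mono hμlam N k
      rw [hcardM, h1]
      omega
    · intro a ha b hb hab
      simp only [Finset.coe_filter, Set.mem_ofPred_eq] at ha hb
      exact heq a ha.1 b hb.1 k ha.2.1 ha.2.2 hb.2.1 hb.2.2 hab
  · rw [stripOf, Finset.image_image]
    have : ∀ t ∈ T, pathCells N n (m t) (ribRow (beads μ N) (T.image m) (m t)) = t := by
      intro t ht
      conv_rhs => rw [(hmρ t ht).2]
      refine Finset.image_congr fun k hk => ?_
      simp only [Finset.coe_Ico, Set.mem_Ico] at hk
      simp only [hrank t ht k hk.1 hk.2]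
    conv_lhs => rw [← Finset.image_id (s := T)]
    exact Finset.image_congr fun t ht => (this t ht).symm

end SuperLLT

namespace SuperLLT

/-! ### States of the one-row model -/

/-- The state in which the beads `M` of `μ` travel along the row.  A bead leaving the vertical edge
`κ` occupies position `p + 1` of the horizontal edge `e` exactly when `κ + n = e + p + 1`. -/
def stateOf (n C N : ℕ) (μ lam : YoungDiagram) (M : Finset ℕ) : GridState n 1 C :=
  (fun r => if r = 0 then diagBoundary μ N C else diagBoundary lam N C,
    fun _ e p => decide (e.val + p.val + 1 ∈ M.image (· + n)))

lemma stateWeight_one {R : Type*} [CommRing R] (n C : ℕ) (tab : VertexType → ℕ → R)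
    (st : GridState n 1 C) : stateWeight n 1 C (fun _ => tab) st =
      ∏ c : Fin C, vertexWeight n tab (st.1 0 c) (st.1 1 c) (st.2 0 c.castSucc)
        (st.2 0 c.succ) := by
  simp [stateWeight]

/-- The local rule at a vertex of nonzero weight: labels shift, a bead departs only from an
occupied column, and beads are conserved. -/
lemma vertex_rule {R : Type*} [CommRing R] {n : ℕ} (hn : 0 < n) {q y : R} {vN vS : Bool}
    {vW vE : Fin n → Bool} (h : vertexWeight n (vertTable q y) vN vS vW vE ≠ 0) :
    (∀ k : Fin n, ∀ hk : k.val + 1 < n, vE k = vW ⟨k.val + 1, hk⟩) ∧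
      (vE ⟨n - 1, Nat.sub_lt hn Nat.one_pos⟩ = true → vN = true) ∧
      vS.toNat + (vE ⟨n - 1, Nat.sub_lt hn Nat.one_pos⟩).toNat =
        vN.toNat + (vW ⟨0, hn⟩).toNat := by
  unfold vertexWeight at h
  rw [dif_pos hn] at h
  split_ifs at h with hsh
  · refine ⟨hsh, ?_⟩
    generalize vE ⟨n - 1, Nat.sub_lt hn Nat.one_pos⟩ = d at *
    generalize vW ⟨0, hn⟩ = a at *
    revert h
    cases vN <;> cases vS <;> cases a <;> cases d <;> simp [classify, vertTable]
  · exact absurd rfl h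

lemma beads_le {μ lam : YoungDiagram} (h : μ ≤ lam) {N x : ℕ} (hx : x ∈ beads μ N) :
    x ≤ lam.rowLen 0 + N := by
  obtain ⟨i, hi, rfl⟩ := (mem_beads μ N).1 hx
  have h1 := rowLen_mono h i
  have h2 := lam.rowLen_anti 0 i (Nat.zero_le i)
  omega

section states

variable {N n : ℕ} {μ lam : YoungDiagram} {M : Finset ℕ}

lemma ValidJump.shift_mem (hn : 1 ≤ n) (hM : ValidJump n (beads μ N) (beads lam N) M) {k : ℕ}
    (hk : k ∈ M.image (· + n)) : k ∈ beads lam N := by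
  have h := (validJump_iff (zero_notMem_beads μ N) (zero_notMem_beads lam N) hn).1 hM
  have h1 := h.2 k
  have h2 : k ∈ M → k ∈ beads μ N := fun hk => h.1 hk
  by_contra hB
  rw [if_pos hk, if_neg hB] at h1
  split_ifs at h1 <;> first | omega | (exfalso; tauto)

lemma boundaryCond_stateOf (hn : 1 ≤ n)
    (hM : ValidJump n (beads μ N) (beads lam N) M) :
    BoundaryCond (diagBoundary μ N (lam.rowLen 0 + N)) (diagBoundary lam N (lam.rowLen 0 + N))
      (fun _ _ => false) (fun _ _ => false) (stateOf n (lam.rowLen 0 + N) N μ lam M) := by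
  refine ⟨by simp [stateOf], by simp [stateOf], fun r => ⟨?_, ?_⟩⟩
  · funext p
    refine decide_eq_false ?_
    rw [mem_shift]
    change ¬ (n ≤ 0 + p.val + 1 ∧ 0 + p.val + 1 - n ∈ M)
    rintro ⟨h1, h2⟩
    have h3 : 0 + p.val + 1 - n = 0 := by omega
    rw [h3] at h2
    exact zero_notMem_beads μ N (hM.1 h2)
  · funext p
    simp only [stateOf, decide_eq_false_iff_not, Fin.val_last]
    intro h
    have := beads_le le_rfl (hM.shift_mem hn h)
    omega

lemma exists_stateOf (hn : 1 ≤ n) (hμlam : μ ≤ lam) {R : Type*} [CommRing R] {q y : R}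
    {st : GridState n 1 (lam.rowLen 0 + N)}
    (hbc : BoundaryCond (diagBoundary μ N (lam.rowLen 0 + N))
      (diagBoundary lam N (lam.rowLen 0 + N)) (fun _ _ => false) (fun _ _ => false) st)
    (hw : stateWeight n 1 (lam.rowLen 0 + N) (fun _ => vertTable q y) st ≠ 0) :
    ∃ M, ValidJump n (beads μ N) (beads lam N) M ∧
      st = stateOf n (lam.rowLen 0 + N) N μ lam M := by
  obtain ⟨htop, hbot, hside⟩ := hbc
  have hlast : (Fin.last 1 : Fin 2) = 1 := rfl
  rw [hlast] at hbot
  generalize hC : lam.rowLen 0 + N = C at *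
  rw [stateWeight_one] at hw
  have hv : ∀ c : Fin C, _ := fun c => vertex_rule (R := R) hn
    (fun h0 => hw (Finset.prod_eq_zero (Finset.mem_univ c) h0))
  -- `M` collects the columns in which a bead departs
  set M : Finset ℕ := (Finset.univ.filter fun c : Fin C =>
    st.2 0 c.succ ⟨n - 1, Nat.sub_lt hn Nat.one_pos⟩ = true).image fun c => c.val + 1 with hMdef
  have hMmem : ∀ c : Fin C, c.val + 1 ∈ M ↔
      st.2 0 c.succ ⟨n - 1, Nat.sub_lt hn Nat.one_pos⟩ = true := by
    intro c
    simp only [hMdef, Finset.mem_image, Finset.mem_filter, Finset.mem_univ, true_and]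
    constructor
    · rintro ⟨d, hd, h⟩
      obtain rfl : d = c := Fin.ext (by omega)
      exact hd
    · intro h
      exact ⟨c, h, rfl⟩
  have hMle : ∀ k ∈ M, 1 ≤ k ∧ k ≤ C := by
    intro k hk
    simp only [hMdef, Finset.mem_image, Finset.mem_filter] at hk
    obtain ⟨c, -, rfl⟩ := hk
    omega
  have hedge : ∀ e (he : e < C + 1) (p : Fin n),
      st.2 0 ⟨e, he⟩ p = decide (e + p.val + 1 ∈ M.image (· + n)) := by
    intro e
    induction e with
    | zero =>
      intro he p
      have h1 : st.2 0 ⟨0, he⟩ p = false := congrFun (hside 0).1 p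
      rw [h1, eq_comm, decide_eq_false_iff_not, mem_shift]
      rintro ⟨h2, h3⟩
      have := hMle _ h3
      omega
    | succ e ih =>
      intro he p
      by_cases hp : p.val + 1 < n
      · have h1 := (hv ⟨e, by omega⟩).1 p hp
        refine Eq.trans h1 ((ih (by omega) _).trans ?_)
        simp only [show e + (p.val + 1) + 1 = e + 1 + p.val + 1 by omega]
      · have h1 := hMmem ⟨e, by omega⟩
        have h2 : p = ⟨n - 1, Nat.sub_lt hn Nat.one_pos⟩ := Fin.ext (by simp only; omega)
        rw [← h2] at h1
        have h3 : e + 1 + p.val + 1 ∈ M.image (· + n) ↔ e + 1 ∈ M := by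
          rw [mem_shift, show e + 1 + p.val + 1 - n = e + 1 by omega]
          simp only [and_iff_right_iff_imp]
          omega
        simp only [h3]
        simp only [Fin.succ_mk] at h1
        rw [Bool.eq_iff_iff, decide_eq_true_iff]
        exact h1.symm
  refine ⟨M, ?_, ?_⟩
  · rw [validJump_iff (zero_notMem_beads μ N) (zero_notMem_beads lam N) hn]
    constructor
    · intro k hk
      obtain ⟨h1, h2⟩ := hMle k hk
      obtain ⟨c, rfl⟩ : ∃ c : Fin C, c.val + 1 = k := ⟨⟨k - 1, by omega⟩, by simp only; omega⟩
      have h3 := (hv c).2.1 ((hMmem c).1 hk)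
      rw [htop] at h3
      exact of_decide_eq_true h3
    · intro k
      by_cases hk : 1 ≤ k ∧ k ≤ C
      · obtain ⟨c, rfl⟩ : ∃ c : Fin C, c.val + 1 = k :=
          ⟨⟨k - 1, by omega⟩, by simp only; omega⟩
        have h3 := (hv c).2.2
        have h4 : (st.2 0 c.succ ⟨n - 1, Nat.sub_lt hn Nat.one_pos⟩).toNat =
            if c.val + 1 ∈ M then 1 else 0 := by
          by_cases h : c.val + 1 ∈ M
          · rw [if_pos h, (hMmem c).1 h]; rfl
          · rw [if_neg h, Bool.eq_false_iff.2 (mt (hMmem c).2 h)]; rfl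
        have h5 : st.2 0 c.castSucc ⟨0, hn⟩ = decide (c.val + 1 ∈ M.image (· + n)) :=
          hedge c.val (by omega) ⟨0, hn⟩
        have h6 : st.1 0 c = decide (c.val + 1 ∈ beads μ N) := by rw [htop]; rfl
        have h7 : st.1 1 c = decide (c.val + 1 ∈ beads lam N) := by rw [hbot]; rfl
        rw [h4, h5, h6, h7] at h3
        simpa only [Bool.toNat, Bool.cond_decide] using h3
      · have h1 : k ∉ beads lam N := by
          intro h
          have h1 := beads_le le_rfl h
          have h2 : k ≠ 0 := fun h0 => zero_notMem_beads lam N (h0 ▸ h)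
          omega
        have h2 : k ∉ beads μ N := by
          intro h
          have h1 := beads_le hμlam h
          have h2 : k ≠ 0 := fun h0 => zero_notMem_beads μ N (h0 ▸ h)
          omega
        have h3 : k ∉ M := fun h => hk (hMle k h)
        have h4 : k ∉ M.image (· + n) := by
          intro h
          obtain ⟨h5, h6⟩ := mem_shift.1 h
          have h7 := hMle _ h6
          have h8 := hedge C (by omega) ⟨k - C - 1, by omega⟩
          have h9 : st.2 0 ⟨C, by omega⟩ ⟨k - C - 1, by omega⟩ = false :=
            congrFun (hside 0).2 _
          rw [h9, eq_comm, decide_eq_false_iff_not] at h8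
          simp only [show C + (k - C - 1) + 1 = k by omega] at h8
          exact h8 h
        simp [h1, h2, h3, h4]
  · refine Prod.ext ?_ ?_
    · funext r
      fin_cases r
      · simpa [stateOf] using htop
      · simpa [stateOf] using hbot
    · funext r e p
      obtain rfl : r = 0 := Subsingleton.elim _ _
      exact hedge e.val e.isLt p

lemma vertexWeight_stateOf {R : Type*} [CommRing R] (q y : R) (hn : 1 ≤ n)
    (hM : ValidJump n (beads μ N) (beads lam N) M) (c : ℕ) :
    vertexWeight n (vertTable q y) (decide (c + 1 ∈ beads μ N)) (decide (c + 1 ∈ beads lam N))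
      (fun p => decide (c + p.val + 1 ∈ M.image (· + n)))
      (fun p => decide (c + 1 + p.val + 1 ∈ M.image (· + n))) =
    (if c + 1 ∈ M then -y else 1) * (if c + 1 ∈ beads μ N \ M then
      q ^ (M.filter fun m => m < c + 1 ∧ c + 1 < m + n).card else 1) := by
  have h := (validJump_iff (zero_notMem_beads μ N) (zero_notMem_beads lam N) hn).1 hM
  have hM0 : 0 ∉ M := fun h0 => zero_notMem_beads μ N (hM.1 h0)
  have hcard : ((Finset.univ.filter fun k : Fin n => k.val < n - 1 ∧
      decide (c + 1 + k.val + 1 ∈ M.image (· + n)) = true).card) =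
      (M.filter fun m => m < c + 1 ∧ c + 1 < m + n).card := by
    refine Finset.card_bij (fun k _ => c + 1 + k.val + 1 - n) ?_ ?_ ?_
    · intro k hk
      simp only [Finset.mem_filter, Finset.mem_univ, true_and, decide_eq_true_iff,
        mem_shift] at hk ⊢
      exact ⟨hk.2.2, by omega, by omega⟩
    · intro k hk l hl hkl
      simp only [Finset.mem_filter, Finset.mem_univ, true_and, decide_eq_true_iff,
        mem_shift] at hk hl
      exact Fin.ext (by omega)
    · intro m hm
      rw [Finset.mem_filter] at hm
      refine ⟨⟨m + n - (c + 1) - 1, by omega⟩, ?_, by simp only; omega⟩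
      simp only [Finset.mem_filter, Finset.mem_univ, true_and, decide_eq_true_iff, mem_shift]
      rw [show c + 1 + (m + n - (c + 1) - 1) + 1 - n = m by omega]
      exact ⟨by omega, by omega, hm.1⟩
  have hlast : c + 1 + (n - 1) + 1 ∈ M.image (· + n) ↔ c + 1 ∈ M := by
    rw [mem_shift, show c + 1 + (n - 1) + 1 - n = c + 1 by omega]
    simp only [and_iff_right_iff_imp]
    omega
  unfold vertexWeight
  rw [dif_pos (by omega), if_pos]
  · simp only [hcard, hlast, Nat.add_zero, Finset.mem_sdiff]
    have h1 := h.2 (c + 1)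
    have h2 : c + 1 ∈ M → c + 1 ∈ beads μ N := fun hk => h.1 hk
    by_cases hA : c + 1 ∈ beads μ N <;> by_cases hB : c + 1 ∈ beads lam N <;>
      by_cases hm : c + 1 ∈ M <;> by_cases hs : c + 1 ∈ M.image (· + n) <;>
      simp only [hA, hB, hm, hs, if_true, if_false] at h1 h2 ⊢ <;>
      first
      | omega
      | exact absurd (h2 trivial) id
      | simp [classify, vertTable]
  · intro k hk
    simp only [show c + (k.val + 1) + 1 = c + 1 + k.val + 1 by omega]

lemma prod_columns {R : Type*} [CommRing R] {C : ℕ} {S : Finset ℕ}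
    (hS : ∀ k ∈ S, 1 ≤ k ∧ k ≤ C) (g : ℕ → R) :
    ∏ c : Fin C, (if c.val + 1 ∈ S then g (c.val + 1) else 1) = ∏ k ∈ S, g k := by
  rw [Fin.prod_univ_eq_prod_range (fun c => if c + 1 ∈ S then g (c + 1) else 1) C,
    ← Finset.prod_filter]
  refine Finset.prod_nbij (· + 1) ?_ ?_ ?_ ?_
  · intro c hc
    exact (Finset.mem_filter.1 hc).2
  · exact (add_left_injective 1).injOn
  · intro k hk
    have := hS k hk
    refine ⟨k - 1, ?_, by simp only; omega⟩
    rw [Finset.mem_coe, Finset.mem_filter, Finset.mem_range, Nat.sub_add_cancel this.1]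
    exact ⟨by omega, hk⟩
  · intro c _
    rfl

lemma stateWeight_stateOf {R : Type*} [CommRing R] (q y : R) (hn : 1 ≤ n) (hμlam : μ ≤ lam)
    (hM : ValidJump n (beads μ N) (beads lam N) M) :
    stateWeight n 1 (lam.rowLen 0 + N) (fun _ => vertTable q y)
      (stateOf n (lam.rowLen 0 + N) N μ lam M) =
    q ^ tilesSpin (stripOf N n (beads μ N) M) * (-y) ^ (stripOf N n (beads μ N) M).card := by
  have hpos : ∀ k ∈ beads μ N, 1 ≤ k ∧ k ≤ lam.rowLen 0 + N := by
    intro k hk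
    refine ⟨Nat.one_le_iff_ne_zero.2 ?_, beads_le hμlam hk⟩
    rintro rfl
    exact zero_notMem_beads μ N hk
  rw [stateWeight_one]
  have h1 : ∀ c : Fin (lam.rowLen 0 + N), vertexWeight n (vertTable q y)
      ((stateOf n (lam.rowLen 0 + N) N μ lam M).1 0 c)
      ((stateOf n (lam.rowLen 0 + N) N μ lam M).1 1 c)
      ((stateOf n (lam.rowLen 0 + N) N μ lam M).2 0 c.castSucc)
      ((stateOf n (lam.rowLen 0 + N) N μ lam M).2 0 c.succ) = _ :=
    fun c => vertexWeight_stateOf q y hn hM c.val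
  rw [Finset.prod_congr rfl fun c _ => h1 c, Finset.prod_mul_distrib,
    prod_columns (S := M) (fun k hk => hpos k (hM.1 hk)) (fun _ => -y),
    prod_columns (S := beads μ N \ M) (fun k hk => hpos k (Finset.mem_sdiff.1 hk).1)
      (fun k => q ^ (M.filter fun m => m < k ∧ k < m + n).card),
    Finset.prod_const, Finset.prod_pow_eq_pow_sum, mul_comm, tilesSpin, stripOf,
    Finset.sum_image (stripTile_injOn hn hM.1),
    Finset.card_image_of_injOn (stripTile_injOn hn hM.1),
    Finset.sum_congr rfl fun m hm => spin_stripTile hn hM.1 hm]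
  -- both sums count the pairs of a jumping bead and a resting bead that it jumps over
  congr 2
  exact (Finset.sum_card_bipartiteAbove_eq_sum_card_bipartiteBelow
    (fun m k => m < k ∧ k < m + n)).symm

end states

end SuperLLT

namespace SuperLLT

/-- **One-row lattice model and vertical ribbon strips** (Proposition `prop:vribbon`).
Let `n ≥ 1`, let `lam/μ` be a skew shape, and let `N` be at least the number of parts of
`lam`.  In the one-row `n`-ribbon lattice model with vertical-strip weights (generic
parameters `q = X 0`, `y = X 1` in `ℤ[q,y]`) and boundary condition `B_{lam/μ}`, the
states of nonzero weight are in bijection with the vertical `n`-ribbon strip tilings of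
`lam/μ`, the state corresponding to a strip of `m` ribbons of total spin `σ` having
weight `q^σ (-y)^m`.  Consequently (now over any commutative ring) the partition function
equals `Σ_S q^{σ(S)} (-y)^{m(S)}`, summed over all vertical strips `S` of shape
`lam/μ`. -/
theorem oneRow_vertical_strips (n : ℕ) (hn : 1 ≤ n) (μ lam : YoungDiagram)
    (hμlam : μ ≤ lam) (N : ℕ) (hN : lam.colLen 0 ≤ N) :
    (∃ φ : {st : GridState n 1 (lam.rowLen 0 + N) //
          BoundaryCond (diagBoundary μ N (lam.rowLen 0 + N))
              (diagBoundary lam N (lam.rowLen 0 + N))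
              (fun _ _ => false) (fun _ _ => false) st ∧
            stateWeight n 1 (lam.rowLen 0 + N)
              (fun _ => vertTable (MvPolynomial.X 0) (MvPolynomial.X 1)
                (R := MvPolynomial (Fin 2) ℤ)) st ≠ 0} ≃
        {tiles : Finset (Finset (ℕ × ℕ)) //
          IsVerticalTiling n (lam.cells \ μ.cells) tiles},
      ∀ st, stateWeight n 1 (lam.rowLen 0 + N)
          (fun _ => vertTable (MvPolynomial.X 0) (MvPolynomial.X 1)
            (R := MvPolynomial (Fin 2) ℤ)) st.val =
        MvPolynomial.X 0 ^ tilesSpin (φ st).val *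
          (-(MvPolynomial.X 1 : MvPolynomial (Fin 2) ℤ)) ^ (φ st).val.card) ∧
    (∀ (R : Type) [CommRing R], ∀ q y : R,
        partitionZ n 1 (lam.rowLen 0 + N) (fun _ => vertTable q y)
            (diagBoundary μ N (lam.rowLen 0 + N)) (diagBoundary lam N (lam.rowLen 0 + N))
            (fun _ _ => false) (fun _ _ => false) =
          ∑ tiles ∈ verticalTilings n μ lam, q ^ tilesSpin tiles * (-y) ^ tiles.card) := by
  have hA := zero_notMem_beads μ N
  have hB := zero_notMem_beads lam N
  constructor
  · have hex := fun (st : {st : GridState n 1 (lam.rowLen 0 + N) //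
          BoundaryCond (diagBoundary μ N (lam.rowLen 0 + N))
              (diagBoundary lam N (lam.rowLen 0 + N))
              (fun _ _ => false) (fun _ _ => false) st ∧
            stateWeight n 1 (lam.rowLen 0 + N)
              (fun _ => vertTable (MvPolynomial.X 0) (MvPolynomial.X 1)
                (R := MvPolynomial (Fin 2) ℤ)) st ≠ 0}) =>
      exists_stateOf hn hμlam st.2.1 st.2.2
    have hex' := fun (T : {tiles : Finset (Finset (ℕ × ℕ)) //
          IsVerticalTiling n (lam.cells \ μ.cells) tiles}) =>
      exists_validJump hn hμlam hN T.2
    choose f hf hst using hex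
    choose g hg hT using hex'
    refine ⟨⟨fun st => ⟨stripOf N n (beads μ N) (f st), isVerticalTiling_stripOf hn hN (hf st)⟩,
      fun T => ⟨stateOf n (lam.rowLen 0 + N) N μ lam (g T),
        boundaryCond_stateOf hn (hg T), ?_⟩, ?_, ?_⟩, ?_⟩
    · rw [stateWeight_stateOf _ _ hn hμlam (hg T)]
      exact mul_ne_zero (pow_ne_zero _ (MvPolynomial.X_ne_zero _))
        (pow_ne_zero _ (neg_ne_zero.2 (MvPolynomial.X_ne_zero _)))
    · intro st
      apply Subtype.ext
      refine Eq.trans ?_ (hst st).symm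
      simp only
      rw [(hg _).unique hA hB hn (hf st)]
    · intro T
      apply Subtype.ext
      refine Eq.trans ?_ (hT T).symm
      simp only
      rw [(hf _).unique hA hB hn (hg T)]
    · intro st
      refine Eq.trans ?_ (stateWeight_stateOf _ _ hn hμlam (hf st))
      rw [← hst st]
  · intro R _ q y
    classical
    rw [partitionZ]
    by_cases hex : ∃ M, ValidJump n (beads μ N) (beads lam N) M
    · obtain ⟨M, hM⟩ := hex
      have hvt : verticalTilings n μ lam = {stripOf N n (beads μ N) M} := by
        ext T
        rw [verticalTilings, Finset.mem_filter, Finset.mem_singleton]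
        constructor
        · rintro ⟨-, h⟩
          obtain ⟨M', hM', rfl⟩ := exists_validJump hn hμlam hN h
          rw [hM'.unique hA hB hn hM]
        · rintro rfl
          have h := isVerticalTiling_stripOf hn hN hM
          refine ⟨Finset.mem_powerset.2 fun t ht => Finset.mem_powerset.2 ?_, h⟩
          rw [← h.1.2.2]
          exact Finset.le_sup (f := id) ht
      rw [hvt, Finset.sum_singleton, ← stateWeight_stateOf q y hn hμlam hM]
      apply Finset.sum_eq_single
      · intro st hst hne
        by_contra hw
        obtain ⟨M', hM', rfl⟩ := exists_stateOf hn hμlam (Finset.mem_filter.1 hst).2 hw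
        exact hne (by rw [hM'.unique hA hB hn hM])
      · intro h
        exact absurd (Finset.mem_filter.2 ⟨Finset.mem_univ _, boundaryCond_stateOf hn hM⟩) h
    · have hvt : verticalTilings n μ lam = ∅ := by
        rw [verticalTilings, Finset.filter_eq_empty_iff]
        intro T _ h
        obtain ⟨M, hM, -⟩ := exists_validJump hn hμlam hN h
        exact hex ⟨M, hM⟩
      rw [hvt, Finset.sum_empty]
      refine Finset.sum_eq_zero fun st hst => ?_
      by_contra hw
      obtain ⟨M, hM, -⟩ := exists_stateOf hn hμlam (Finset.mem_filter.1 hst).2 hw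
      exact hex ⟨M, hM⟩

end SuperLLT
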